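/- Let R be a commutative ring, n ≥ 2, and E ⊆ {1,…,n} with 1 ∈ E and 2 ∈ E. Let σ be the R-algebra endomorphism of R[X_1,…,X_n] with σ(X_1) = X_1, σ(X_2) = X_1·X_2, and σ(X_j) = X_j for j ≥ 3. Then for every f ∈ R[X_1,…,X_n] and every h ∈ ∆_E(f), the polynomial σ(h) belongs to the ideal of R[X_1,…,X_n] generated by ∆_E(σ(f)). -/

import Mathlib

open MvPolynomial

/-- `∆_{E'}(F) = {F} ∪ {X_e · ∂F/∂X_e : e ∈ E'} ∪ {∂F/∂X_u : u ∉ E'}`. -/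
def deltaSet {R : Type*} [CommRing R] {n : ℕ} (E : Finset (Fin n))
    (F : MvPolynomial (Fin n) R) : Set (MvPolynomial (Fin n) R) :=
  {F} ∪ {h | ∃ e ∈ E, h = X e * pderiv e F} ∪
    {h | ∃ u : Fin n, u ∉ E ∧ h = pderiv u F}

theorem chain_aux {R : Type*} [CommRing R] {n : ℕ}
    (σ : MvPolynomial (Fin n) R →ₐ[R] MvPolynomial (Fin n) R) (k p q : Fin n)
    (a b : MvPolynomial (Fin n) R)
    (H : ∀ i, pderiv k (σ (X i)) = a * σ (pderiv p (X i)) + b * σ (pderiv q (X i)))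
    (f : MvPolynomial (Fin n) R) :
    pderiv k (σ f) = a * σ (pderiv p f) + b * σ (pderiv q f) := by
  induction f using MvPolynomial.induction_on with
  | C r =>
    have : σ (C r) = C r := σ.commutes r
    simp [this]
  | add f g hf hg => simp only [map_add, hf, hg]; ring
  | mul_X f i hf =>
    simp only [map_mul, pderiv_mul, map_add, hf, H]; ring

/-- **Lemma 5.8, chart version for a transformation of type (iii)
(Bierstone–Milman, "Desingularization algorithms I").**
For the chart substitution of an exceptional blowing-up with centre
`{X₁ = X₂ = 0}` (`σ(X₁) = X₁`, `σ(X₂) = X₁·X₂`, `σ(X_j) = X_j` for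
`j ≥ 3`), where the indices `1, 2` belong to the exceptional set `E`:
for every `h ∈ ∆_E(f)`, `σ(h)` lies in the ideal generated by
`∆_E(σ(f))`. (Variables are indexed by `Fin n`: `X_1` is `X ⟨0,_⟩`,
`X_2` is `X ⟨1,_⟩`, and "`j ≥ 3`" is "`2 ≤ (j : ℕ)`".) -/
theorem stmt_5 {R : Type*} [CommRing R] {n : ℕ} (hn : 2 ≤ n)
    (E : Finset (Fin n))
    (h1E : (⟨0, by omega⟩ : Fin n) ∈ E) (h2E : (⟨1, by omega⟩ : Fin n) ∈ E)
    (σ : MvPolynomial (Fin n) R →ₐ[R] MvPolynomial (Fin n) R)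
    (hσ1 : σ (X ⟨0, by omega⟩) = X (⟨0, by omega⟩ : Fin n))
    (hσ2 : σ (X ⟨1, by omega⟩) = X (⟨0, by omega⟩ : Fin n) * X ⟨1, by omega⟩)
    (hσj : ∀ j : Fin n, 2 ≤ (j : ℕ) → σ (X j) = X j)
    (f : MvPolynomial (Fin n) R) :
    ∀ h ∈ deltaSet E f, σ h ∈ Ideal.span (deltaSet E (σ f)) := by
  have hcase : ∀ i : Fin n, i = ⟨0, by omega⟩ ∨ i = ⟨1, by omega⟩ ∨ 2 ≤ (i : ℕ) := by
    intro i
    rcases i with ⟨i, hi⟩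
    simp only [Fin.mk.injEq]
    omega
  generalize hz : (⟨0, by omega⟩ : Fin n) = z at *
  generalize ho : (⟨1, by omega⟩ : Fin n) = o at *
  have hz' : (z : ℕ) = 0 := by rw [← hz]
  have ho' : (o : ℕ) = 1 := by rw [← ho]
  have hzo : z ≠ o := by intro h; rw [h] at hz'; omega
  have c0 : pderiv z (σ f) = 1 * σ (pderiv z f) + X o * σ (pderiv o f) := by
    apply chain_aux
    intro i
    rcases hcase i with rfl | rfl | h
    · simp [hσ1, pderiv_X_of_ne hzo]
    · simp [hσ2, pderiv_X_of_ne hzo.symm]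
    · have h1 : i ≠ z := by rintro rfl; omega
      have h2 : i ≠ o := by rintro rfl; omega
      simp [hσj i h, pderiv_X_of_ne h1, pderiv_X_of_ne h2]
  have c1 : pderiv o (σ f) = X z * σ (pderiv o f) + 0 * σ (pderiv o f) := by
    apply chain_aux
    intro i
    rcases hcase i with rfl | rfl | h
    · simp [hσ1, pderiv_X_of_ne hzo]
    · simp [hσ2, pderiv_X_of_ne hzo]
    · have h2 : i ≠ o := by rintro rfl; omega
      simp [hσj i h, pderiv_X_of_ne h2]
  have cj : ∀ j : Fin n, 2 ≤ (j : ℕ) →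
      pderiv j (σ f) = 1 * σ (pderiv j f) + 0 * σ (pderiv j f) := by
    intro j hj
    have h1 : z ≠ j := by rintro rfl; omega
    have h2 : o ≠ j := by rintro rfl; omega
    apply chain_aux
    intro i
    rcases hcase i with rfl | rfl | h
    · simp [hσ1, pderiv_X_of_ne h1]
    · simp [hσ2, pderiv_X_of_ne h1, pderiv_X_of_ne h2]
    · rw [hσj i h]
      by_cases hij : i = j
      · subst hij; simp
      · simp [pderiv_X_of_ne hij]
  have mE : ∀ e ∈ E, X e * pderiv e (σ f) ∈ Ideal.span (deltaSet E (σ f)) :=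
    fun e he => Ideal.subset_span (Or.inl (Or.inr ⟨e, he, rfl⟩))
  rintro h ((rfl | ⟨e, he, rfl⟩) | ⟨u, hu, rfl⟩)
  · exact Ideal.subset_span (Or.inl (Or.inl rfl))
  · rcases hcase e with rfl | rfl | h
    · have := Ideal.sub_mem _ (mE _ h1E) (mE _ h2E)
      rw [c0, c1] at this
      rw [map_mul, hσ1]
      convert this using 1
      ring
    · have := mE _ h2E
      rw [c1] at this
      rw [map_mul, hσ2]
      convert this using 1
      ring
    · have := mE _ he
      rw [cj e h] at this
      rw [map_mul, hσj e h]
      convert this using 1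
      ring
  · have hu2 : 2 ≤ (u : ℕ) := by
      rcases hcase u with rfl | rfl | h
      · exact absurd h1E hu
      · exact absurd h2E hu
      · exact h
    have : pderiv u (σ f) ∈ Ideal.span (deltaSet E (σ f)) :=
      Ideal.subset_span (Or.inr ⟨u, hu, rfl⟩)
    rw [cj u hu2] at this
    convert this using 1
    ring
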